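/- Let d ≥ 2, let Ψ(x) = ‖x‖^{1−d} for x ≠ 0, let a : ℝ^d → ℝ be smooth with 0 ≤ a ≤ 1, a ≡ 1 on B_1(0) and supp a ⊆ B_2(0), and let r ≥ 0 be an integer. There exists a constant C > 0, depending only on d, r and a, such that for every smooth f : ℝ^d → ℝ with finite uniformly local Sobolev norm ‖f‖_{H^r_ul} := ∑_{|β| ≤ r} sup_{x} ‖D^β f‖_{L²(B_1(x))}, the convolution (aΨ) * f is well defined and continuously differentiable, and each component of its gradient satisfies ∑_{|α| ≤ r} sup_{x ∈ ℝ^d} ‖D^α ∂_i ((aΨ) * f)‖_{L²(B_1(x))} ≤ C ‖f‖_{H^r_ul} for i = 1, …, d. -/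

import Mathlib

/-!
Let `K = aΨ`, where `Ψ` is homogeneous of degree `1 - d`. Splitting the integral at `‖y‖ ~ ‖h‖` and
using Taylor's formula away from the origin, scaling shows that the symmetric second difference of
`Ψ` with step `h` has `L¹` norm `O(‖h‖)`, and so does that of `K`, since `a` is Lipschitz with
compact support. For `h = ξ / (2‖ξ‖²)` the second difference multiplies the Fourier transform at `ξ`
by `2 cos π - 2 = -4`, so `‖ξ‖ ‖𝓕 K ξ‖` is bounded and Plancherel's theorem bounds
`f ↦ ∂ᵢ(K ⋆ f)` on `L²`. As `K` has compact support, this operator is local up to a bounded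
distance, so the bound passes to uniformly local `L²` norms by cutting off `f`; as it commutes with
derivatives, the bound passes to `H^r_ul`, with a constant independent of `r`.
-/

open MeasureTheory Metric
open scoped ENNReal

noncomputable section

/-- The partial derivative in the `i`-th coordinate direction. -/
def pd {d : ℕ} {F : Type*} [NormedAddCommGroup F] [NormedSpace ℝ F]
    (i : Fin d) (f : EuclideanSpace ℝ (Fin d) → F) : EuclideanSpace ℝ (Fin d) → F :=
  fun x => fderiv ℝ f x (EuclideanSpace.single i 1)

/-- The partial derivative `D^α` associated with a multi-index `α`. -/
def Dm {d : ℕ} {F : Type*} [NormedAddCommGroup F] [NormedSpace ℝ F]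
    (α : Fin d → ℕ) (f : EuclideanSpace ℝ (Fin d) → F) : EuclideanSpace ℝ (Fin d) → F :=
  (List.finRange d).foldr (fun i g => (pd i)^[α i] g) f

/-- The finite set of multi-indices `α` on `ℝ^d` with `|α| ≤ s`. -/
def mSet (d s : ℕ) : Finset (Fin d → ℕ) :=
  (Finset.Iic (fun _ => s : Fin d → ℕ)).filter fun α => (∑ i, α i) ≤ s

/-- The uniformly local Sobolev norm
`‖f‖_{H^s_ul} = ∑_{|α| ≤ s} sup_x ‖D^α f‖_{L²(B₁(x))}`. -/
def ulSobolev (d s : ℕ) {F : Type*} [NormedAddCommGroup F] [NormedSpace ℝ F]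
    (f : EuclideanSpace ℝ (Fin d) → F) : ℝ≥0∞ :=
  ∑ α ∈ mSet d s, ⨆ x : EuclideanSpace ℝ (Fin d),
    eLpNorm (Dm α f) 2 (volume.restrict (ball x 1))

open scoped NNReal

/-- The symmetric second difference of `f` at `y` with step `h`; its `L¹` norm in `y` is the
smoothness of a kernel that survives the singularity at the origin. -/
def secondDiff {V F : Type*} [AddGroup V] [AddCommGroup F] (f : V → F) (h y : V) : F :=
  f (y + h) + f (y - h) - 2 • f y

/-- Positive homogeneity of real degree `q`, the scaling property of singular kernels. It is imposed
also at `x = 0`, so it forces `f 0 = 0` when `q ≠ 0`. -/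
def IsPosHomogeneous {V F : Type*} [AddCommGroup V] [Module ℝ V] [AddCommGroup F] [Module ℝ F]
    (q : ℝ) (f : V → F) : Prop :=
  ∀ ⦃t : ℝ⦄, 0 < t → ∀ x, f (t • x) = t ^ q • f x

section SecondDiff

variable {V F : Type*} [AddGroup V]

theorem secondDiff_comp {G A : Type*} [AddCommGroup F] [AddCommGroup G] [FunLike A F G]
    [AddMonoidHomClass A F G] (φ : A) (f : V → F) (h y : V) :
    secondDiff (fun x => φ (f x)) h y = φ (secondDiff f h y) := by
  simp only [secondDiff, map_sub, map_add, map_nsmul]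

theorem secondDiff_smul_fun {R : Type*} [CommRing R] [AddCommGroup F] [Module R F]
    (a : V → R) (f : V → F) (h y : V) :
    secondDiff (fun x => a x • f x) h y =
      a y • secondDiff f h y + (a (y + h) - a y) • f (y + h) + (a (y - h) - a y) • f (y - h) := by
  simp only [secondDiff]
  module

theorem enorm_secondDiff_le [NormedAddCommGroup F] (f : V → F) (h y : V) :
    ‖secondDiff f h y‖ₑ ≤ ‖f (y + h)‖ₑ + ‖f (y - h)‖ₑ + 2 * ‖f y‖ₑ := by
  refine (enorm_sub_le ..).trans (add_le_add (enorm_add_le _ _) ?_)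
  rw [two_nsmul, two_mul]
  exact enorm_add_le _ _

end SecondDiff

section Taylor

variable {V F : Type*} [NormedAddCommGroup V] [NormedSpace ℝ V] [NormedAddCommGroup F]
  [NormedSpace ℝ F]

theorem norm_secondDiff_le_of_lipschitzOnWith_fderiv {f : V → F} {f' : V → V →L[ℝ] F} {u h : V}
    {r : ℝ} {M : ℝ≥0} (hf : ∀ x ∈ ball u r, HasFDerivAt f (f' x) x)
    (hf' : LipschitzOnWith M f' (ball u r)) (hr : ‖h‖ < r) :
    ‖secondDiff f h u‖ ≤ 2 * M * ‖h‖ ^ 2 := by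
  have hmem : ∀ x ∈ closedBall (0 : V) ‖h‖, u + x ∈ ball u r ∧ u - x ∈ ball u r := fun x hx => by
    rw [mem_closedBall_zero_iff] at hx
    simpa using hx.trans_lt hr
  have hderiv : ∀ x ∈ closedBall (0 : V) ‖h‖,
      HasFDerivAt (fun x => f (u + x) + f (u - x)) (f' (u + x) - f' (u - x)) x := fun x hx => by
    have hadd := (hf _ (hmem x hx).1).comp x ((hasFDerivAt_id x).const_add u)
    have hsub := (hf _ (hmem x hx).2).comp x ((hasFDerivAt_id x).const_sub u)
    refine (hadd.add hsub).congr_fderiv ?_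
    ext v
    simp [sub_eq_add_neg]
  have hbound : ∀ x ∈ closedBall (0 : V) ‖h‖, ‖f' (u + x) - f' (u - x)‖ ≤ 2 * M * ‖h‖ :=
      fun x hx => by
    calc ‖f' (u + x) - f' (u - x)‖ ≤ M * ‖u + x - (u - x)‖ := by
          simpa only [dist_eq_norm] using hf'.dist_le_mul _ (hmem x hx).1 _ (hmem x hx).2
      _ = 2 * M * ‖x‖ := by
          rw [add_sub_sub_cancel, ← two_smul ℝ x, norm_smul, Real.norm_two]
          ring
      _ ≤ 2 * M * ‖h‖ := by
          gcongr
          exact mem_closedBall_zero_iff.1 hx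
  have key := (convex_closedBall (0 : V) ‖h‖).norm_image_sub_le_of_norm_hasFDerivWithin_le
    (fun x hx => (hderiv x hx).hasFDerivWithinAt) hbound (mem_closedBall_self (norm_nonneg h))
    (mem_closedBall_zero_iff.2 le_rfl)
  simpa only [secondDiff, add_zero, sub_zero, two_nsmul, pow_two, mul_assoc] using key

theorem exists_norm_secondDiff_le_of_contDiffOn [ProperSpace V] {f : V → F} {s t : Set V} {δ : ℝ}
    (hs : IsOpen s) (hf : ContDiffOn ℝ 2 f s) (ht : IsCompact t) (hts : cthickening δ t ⊆ s) :
    ∃ C : ℝ≥0, ∀ u ∈ t, ∀ h : V, ‖h‖ < δ → ‖secondDiff f h u‖ ≤ C * ‖h‖ ^ 2 := by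
  have hf' : ContDiffOn ℝ 1 (fderiv ℝ f) s := hf.fderiv_of_isOpen hs le_rfl
  obtain ⟨M, hM⟩ : ∃ M, ∀ x ∈ cthickening δ t, ‖fderiv ℝ (fderiv ℝ f) x‖ ≤ M :=
    ht.cthickening.exists_bound_of_continuousOn
      ((hf'.continuousOn_fderiv_of_isOpen hs le_rfl).mono hts)
  refine ⟨2 * M.toNNReal, fun u hu h hh => ?_⟩
  have hball : ∀ x ∈ ball u δ, x ∈ cthickening δ t := fun x hx =>
    mem_cthickening_of_dist_le x u δ t hu (mem_ball.1 hx).le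
  refine norm_secondDiff_le_of_lipschitzOnWith_fderiv (f' := fderiv ℝ f) (r := δ)
    (fun x hx => ?_) ?_ hh
  · exact ((hf.differentiableOn (by norm_num)).differentiableAt
      (hs.mem_nhds (hts (hball x hx)))).hasFDerivAt
  · refine (convex_ball u δ).lipschitzOnWith_of_nnnorm_fderiv_le (𝕜 := ℝ) (fun x hx => ?_)
      fun x hx => ?_
    · exact (hf'.differentiableOn (by norm_num)).differentiableAt
        (hs.mem_nhds (hts (hball x hx)))
    · exact NNReal.le_toNNReal_of_coe_le (hM x (hball x hx))

end Taylor

namespace IsPosHomogeneous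

variable {V F : Type*} [NormedAddCommGroup V] [NormedSpace ℝ V] [NormedAddCommGroup F]
  [NormedSpace ℝ F] {q : ℝ} {f : V → F}

theorem norm_rpow (q : ℝ) : IsPosHomogeneous q fun x : V => ‖x‖ ^ q := fun t ht x => by
  dsimp only
  rw [norm_smul, Real.norm_of_nonneg ht.le, Real.mul_rpow ht.le (norm_nonneg x), smul_eq_mul]

theorem eq_norm_rpow_smul (hf : IsPosHomogeneous q f) {x : V} (hx : x ≠ 0) :
    f x = ‖x‖ ^ q • f (‖x‖⁻¹ • x) := by
  rw [← hf (norm_pos_iff.2 hx), smul_inv_smul₀ (norm_ne_zero_iff.2 hx)]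

theorem apply_zero (hf : IsPosHomogeneous q f) (hq : q ≠ 0) : f 0 = 0 := by
  have h : (1 - (2 : ℝ) ^ q) • f 0 = 0 := by
    rw [sub_smul, one_smul, sub_eq_zero, ← hf two_pos, smul_zero]
  refine (smul_eq_zero.1 h).resolve_left fun h1 => hq ?_
  rw [sub_eq_zero, ← Real.rpow_zero 2] at h1
  exact ((Real.rpow_right_inj two_pos (by norm_num)).1 h1).symm

theorem secondDiff_smul (hf : IsPosHomogeneous q f) {t : ℝ} (ht : 0 < t) (h y : V) :
    secondDiff f (t • h) (t • y) = t ^ q • secondDiff f h y := by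
  simp only [secondDiff, ← smul_add, ← smul_sub, hf ht, smul_comm (2 : ℕ)]

variable [ProperSpace V]

theorem exists_norm_le (hf : IsPosHomogeneous q f) (hc : ContinuousOn f {0}ᶜ) :
    ∃ C : ℝ, ∀ x, ‖f x‖ ≤ C * ‖x‖ ^ q := by
  obtain ⟨C, hC⟩ := (isCompact_sphere (0 : V) 1).exists_bound_of_continuousOn
    (hc.mono fun x hx => ne_zero_of_mem_unit_sphere ⟨x, hx⟩)
  refine ⟨max C ‖f 0‖, fun x => ?_⟩
  rcases eq_or_ne x 0 with rfl | hx
  · rcases eq_or_ne q 0 with rfl | hq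
    · simp
    · simp [hf.apply_zero hq, hq]
  · have hunit : ‖x‖⁻¹ • x ∈ sphere (0 : V) 1 := by simp [norm_smul, hx]
    rw [hf.eq_norm_rpow_smul hx, norm_smul, Real.norm_of_nonneg (by positivity), mul_comm]
    gcongr
    exact (hC _ hunit).trans (le_max_left _ _)

theorem exists_norm_secondDiff_le (hf : IsPosHomogeneous q f) (hc : ContDiffOn ℝ 2 f {0}ᶜ) :
    ∃ C : ℝ≥0, ∀ h z : V, z ≠ 0 → 2 * ‖h‖ ≤ ‖z‖ →
      ‖secondDiff f h z‖ ≤ C * ‖h‖ ^ 2 * ‖z‖ ^ (q - 2) := by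
  have hannulus : cthickening (3 / 4) (sphere (0 : V) 1) ⊆ {0}ᶜ := by
    rw [(isCompact_sphere (0 : V) 1).cthickening_eq_biUnion_closedBall (by norm_num)]
    rintro _ hx rfl
    obtain ⟨u, hu, hdist⟩ := Set.mem_iUnion₂.1 hx
    rw [mem_closedBall, dist_comm, mem_sphere.1 hu] at hdist
    norm_num at hdist
  obtain ⟨C, hC⟩ := exists_norm_secondDiff_le_of_contDiffOn isOpen_compl_singleton hc
    (isCompact_sphere (0 : V) 1) hannulus
  refine ⟨C, fun h z hz hh => ?_⟩
  have hz0 : 0 < ‖z‖ := norm_pos_iff.2 hz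
  have hunit : ‖z‖⁻¹ • z ∈ sphere (0 : V) 1 := by simp [norm_smul, hz]
  have hnorm : ‖‖z‖⁻¹ • h‖ = ‖h‖ / ‖z‖ := by
    rw [norm_smul, norm_inv, norm_norm, inv_mul_eq_div]
  have hsmall : ‖‖z‖⁻¹ • h‖ < 3 / 4 := by
    rw [hnorm, div_lt_iff₀ hz0]
    linarith
  calc ‖secondDiff f h z‖ = ‖z‖ ^ q * ‖secondDiff f (‖z‖⁻¹ • h) (‖z‖⁻¹ • z)‖ := by
        rw [← Real.norm_of_nonneg (by positivity : 0 ≤ ‖z‖ ^ q), ← norm_smul,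
          ← hf.secondDiff_smul hz0, smul_inv_smul₀ hz0.ne', smul_inv_smul₀ hz0.ne']
    _ ≤ ‖z‖ ^ q * (C * (‖h‖ / ‖z‖) ^ 2) := by
        gcongr
        exact hnorm ▸ hC _ hunit _ hsmall
    _ = C * ‖h‖ ^ 2 * ‖z‖ ^ (q - 2) := by
        rw [Real.rpow_sub hz0, Real.rpow_two]
        ring

end IsPosHomogeneous

section L1

open Module

variable {V F : Type*} [MeasurableSpace V] [NormedAddCommGroup F]

section Translation

variable [AddGroup V] [MeasurableAdd V] {μ : Measure V} [μ.IsAddRightInvariant]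

theorem setLIntegral_comp_add_right_le {s t : Set V} {h : V} (hst : Set.MapsTo (· + h) s t)
    (g : V → ℝ≥0∞) : ∫⁻ y in s, g (y + h) ∂μ ≤ ∫⁻ y in t, g y ∂μ :=
  (lintegral_mono_set hst).trans_eq <|
    (measurePreserving_add_right μ h).setLIntegral_comp_preimage_emb
      (measurableEmbedding_addRight h) g t

theorem setLIntegral_enorm_secondDiff_le {f : V → F} (hf : AEStronglyMeasurable f μ)
    {s t : Set V} {h : V} (hadd : Set.MapsTo (· + h) s t) (hsub : Set.MapsTo (· - h) s t)
    (hst : s ⊆ t) :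
    ∫⁻ y in s, ‖secondDiff f h y‖ₑ ∂μ ≤ 4 * ∫⁻ y in t, ‖f y‖ₑ ∂μ := by
  have hmeas : ∀ k, AEMeasurable (fun y => ‖f (y + k)‖ₑ) (μ.restrict s) := fun k =>
    (hf.comp_measurePreserving (measurePreserving_add_right μ k)).enorm.restrict
  calc ∫⁻ y in s, ‖secondDiff f h y‖ₑ ∂μ
      ≤ ∫⁻ y in s, ‖f (y + h)‖ₑ + ‖f (y + -h)‖ₑ + 2 * ‖f y‖ₑ ∂μ :=
        lintegral_mono fun y => by simpa only [sub_eq_add_neg] using enorm_secondDiff_le f h y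
    _ = ∫⁻ y in s, ‖f (y + h)‖ₑ ∂μ + ∫⁻ y in s, ‖f (y + -h)‖ₑ ∂μ + 2 * ∫⁻ y in s, ‖f y‖ₑ ∂μ := by
        rw [lintegral_add_left' ((hmeas h).fun_add (hmeas (-h))), lintegral_add_left' (hmeas h),
          lintegral_const_mul' _ _ ENNReal.ofNat_ne_top]
    _ ≤ ∫⁻ y in t, ‖f y‖ₑ ∂μ + ∫⁻ y in t, ‖f y‖ₑ ∂μ + 2 * ∫⁻ y in t, ‖f y‖ₑ ∂μ := by
        simp only [sub_eq_add_neg] at hsub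
        exact add_le_add (add_le_add (setLIntegral_comp_add_right_le hadd fun y => ‖f y‖ₑ)
          (setLIntegral_comp_add_right_le hsub fun y => ‖f y‖ₑ))
          (mul_le_mul_right (lintegral_mono_set hst) 2)
    _ = 4 * ∫⁻ y in t, ‖f y‖ₑ ∂μ := by ring

theorem lintegral_enorm_secondDiff_le {f : V → F} (hf : AEStronglyMeasurable f μ) (h : V) :
    ∫⁻ y, ‖secondDiff f h y‖ₑ ∂μ ≤ 4 * ∫⁻ y, ‖f y‖ₑ ∂μ := by
  simpa only [setLIntegral_univ] using setLIntegral_enorm_secondDiff_le hf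
    (Set.mapsTo_univ _ Set.univ) (Set.mapsTo_univ _ Set.univ) Set.Subset.rfl

end Translation

section Truncation

variable [NormedAddCommGroup V] [BorelSpace V] {μ : Measure V} [μ.IsAddRightInvariant]
  [NormedSpace ℝ F] {a : V → ℝ} {f : V → F} {L : ℝ≥0}

theorem lintegral_enorm_sub_smul_le (ha : LipschitzWith L a) {h : V} (hh : ‖h‖ ≤ 1) :
    ∫⁻ y, ‖(a (y + h) - a y) • f (y + h)‖ₑ ∂μ ≤
      L * ‖h‖ₑ * ∫⁻ y in cthickening 1 (tsupport a), ‖f y‖ₑ ∂μ := by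
  rw [← lintegral_sub_right_eq_self _ h, ← lintegral_const_mul' _ _ (by finiteness),
    ← lintegral_indicator isClosed_cthickening.measurableSet]
  simp only [sub_add_cancel]
  refine lintegral_mono fun y => ?_
  by_cases hy : y ∈ cthickening 1 (tsupport a)
  · rw [Set.indicator_of_mem hy, enorm_smul]
    gcongr
    simpa [edist_eq_enorm_sub] using ha.edist_le_mul y (y - h)
  · have hy0 : a y = 0 := image_eq_zero_of_notMem_tsupport fun hmem =>
      hy (self_subset_cthickening _ hmem)
    have hyh0 : a (y - h) = 0 := image_eq_zero_of_notMem_tsupport fun hmem =>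
      hy (mem_cthickening_of_dist_le y (y - h) 1 _ hmem (by simpa [dist_eq_norm] using hh))
    simp [hy0, hyh0]

theorem lintegral_enorm_secondDiff_smul_le (ha : LipschitzWith L a) {A : ℝ≥0}
    (haA : ∀ x, ‖a x‖ₑ ≤ A) (hf : AEStronglyMeasurable f μ) {h : V} (hh : ‖h‖ ≤ 1) :
    ∫⁻ y, ‖secondDiff (fun x => a x • f x) h y‖ₑ ∂μ ≤
      A * ∫⁻ y, ‖secondDiff f h y‖ₑ ∂μ +
        2 * (L * ‖h‖ₑ * ∫⁻ y in cthickening 1 (tsupport a), ‖f y‖ₑ ∂μ) := by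
  have hmeas : ∀ k, AEMeasurable (fun y => ‖(a (y + k) - a y) • f (y + k)‖ₑ) μ := fun k => by
    have ha' : Continuous fun y => a (y + k) - a y := by
      have := ha.continuous
      fun_prop
    exact (ha'.aestronglyMeasurable.smul
      (hf.comp_measurePreserving (measurePreserving_add_right μ k))).enorm
  calc ∫⁻ y, ‖secondDiff (fun x => a x • f x) h y‖ₑ ∂μ
      ≤ ∫⁻ y, A * ‖secondDiff f h y‖ₑ + ‖(a (y + h) - a y) • f (y + h)‖ₑ +
          ‖(a (y + -h) - a y) • f (y + -h)‖ₑ ∂μ := by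
        refine lintegral_mono fun y => ?_
        rw [secondDiff_smul_fun, ← sub_eq_add_neg]
        refine enorm_add₃_le.trans ?_
        rw [enorm_smul (a y)]
        gcongr
        exact haA y
    _ = A * ∫⁻ y, ‖secondDiff f h y‖ₑ ∂μ + ∫⁻ y, ‖(a (y + h) - a y) • f (y + h)‖ₑ ∂μ +
          ∫⁻ y, ‖(a (y + -h) - a y) • f (y + -h)‖ₑ ∂μ := by
        rw [lintegral_add_right' _ (hmeas (-h)), lintegral_add_right' _ (hmeas h),
          lintegral_const_mul' _ _ ENNReal.coe_ne_top]
    _ ≤ _ := by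
        rw [add_assoc, two_mul]
        gcongr
        · exact lintegral_enorm_sub_smul_le ha hh
        · simpa only [enorm_neg] using lintegral_enorm_sub_smul_le ha ((norm_neg h).trans_le hh)

end Truncation

variable [NormedAddCommGroup V] [NormedSpace ℝ V] [FiniteDimensional ℝ V] [BorelSpace V]
  {μ : Measure V} [μ.IsAddHaarMeasure] [NormedSpace ℝ F]

theorem lintegral_comp_smul (μ : Measure V) [μ.IsAddHaarMeasure] (g : V → ℝ≥0∞) {t : ℝ}
    (ht : t ≠ 0) :
    ∫⁻ x, g (t • x) ∂μ = ENNReal.ofReal |(t ^ finrank ℝ V)⁻¹| * ∫⁻ x, g x ∂μ := by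
  rw [← smul_eq_mul, ← lintegral_smul_measure, ← Measure.map_addHaar_smul μ ht]
  exact ((Homeomorph.smulOfNeZero t ht).measurableEmbedding.lintegral_map g).symm

namespace IsPosHomogeneous

variable {q : ℝ} {f : V → F}

theorem lintegral_enorm_secondDiff_smul (hf : IsPosHomogeneous q f) {t : ℝ} (ht : 0 < t) (h : V) :
    ∫⁻ y, ‖secondDiff f (t • h) y‖ₑ ∂μ =
      ENNReal.ofReal (t ^ (finrank ℝ V + q)) * ∫⁻ y, ‖secondDiff f h y‖ₑ ∂μ := by
  have hcomp := lintegral_comp_smul μ (fun y => ‖secondDiff f (t • h) y‖ₑ) ht.ne'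
  simp only [hf.secondDiff_smul ht, enorm_smul] at hcomp
  rw [lintegral_const_mul' _ _ enorm_ne_top, Real.enorm_of_nonneg (by positivity),
    abs_of_pos (by positivity)] at hcomp
  rw [Real.rpow_add ht, Real.rpow_natCast, ENNReal.ofReal_mul (by positivity), mul_assoc, hcomp,
    ← mul_assoc, ← ENNReal.ofReal_mul (by positivity), mul_inv_cancel₀ (by positivity),
    ENNReal.ofReal_one, one_mul]

theorem locallyIntegrable [Nontrivial V] (hf : IsPosHomogeneous q f) (hc : ContinuousOn f {0}ᶜ)
    (hq : -finrank ℝ V < q) : LocallyIntegrable f μ := by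
  obtain ⟨C, hC⟩ := hf.exists_norm_le hc
  have hmeas : AEStronglyMeasurable f μ := by
    rw [← restrict_compl_singleton (μ := μ) 0]
    exact hc.aestronglyMeasurable (measurableSet_singleton 0).compl
  refine locallyIntegrable_of_norm_le_rpow (C := C) (α := -q) finrank_pos (by linarith)
    (.of_forall fun x => ?_) hmeas
  simpa only [neg_neg] using hC x

theorem exists_setLIntegral_compl_ball_enorm_secondDiff_le (hf : IsPosHomogeneous q f)
    (hc : ContDiffOn ℝ 2 f {0}ᶜ) (hq : q < 2 - finrank ℝ V) :
    ∃ C : ℝ≥0, ∀ e : V, ‖e‖ ≤ 1 → ∫⁻ y in (ball 0 2)ᶜ, ‖secondDiff f e y‖ₑ ∂μ ≤ C := by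
  obtain ⟨C, hC⟩ := hf.exists_norm_secondDiff_le hc
  have hq2 : q - 2 ≤ 0 := by linarith [(finrank ℝ V).cast_nonneg (α := ℝ)]
  have hint : ∫⁻ y : V, ENNReal.ofReal ((1 + ‖y‖) ^ (-(2 - q))) ∂μ < ∞ :=
    finite_integral_one_add_norm (by linarith)
  have hbound : ∀ e y : V, ‖e‖ ≤ 1 → y ∈ (ball (0 : V) 2)ᶜ →
      ‖secondDiff f e y‖ ≤ C * 2⁻¹ ^ (q - 2) * (1 + ‖y‖) ^ (-(2 - q)) := fun e y he hy => by
    have hy2 : 2 ≤ ‖y‖ := by simpa using hy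
    have hpow : ‖y‖ ^ (q - 2) ≤ (2⁻¹ * (1 + ‖y‖)) ^ (q - 2) :=
      Real.rpow_le_rpow_of_nonpos (by positivity) (by linarith) hq2
    calc ‖secondDiff f e y‖ ≤ C * ‖e‖ ^ 2 * ‖y‖ ^ (q - 2) :=
          hC e y (norm_pos_iff.1 (by linarith)) (by linarith)
      _ ≤ C * 1 ^ 2 * (2⁻¹ * (1 + ‖y‖)) ^ (q - 2) := by
          gcongr
      _ = C * 2⁻¹ ^ (q - 2) * (1 + ‖y‖) ^ (-(2 - q)) := by
          rw [Real.mul_rpow (by norm_num) (by positivity), neg_sub]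
          ring
  refine ⟨(ENNReal.ofReal (C * 2⁻¹ ^ (q - 2)) *
    ∫⁻ y : V, ENNReal.ofReal ((1 + ‖y‖) ^ (-(2 - q))) ∂μ).toNNReal, fun e he => ?_⟩
  rw [ENNReal.coe_toNNReal (ENNReal.mul_ne_top ENNReal.ofReal_ne_top hint.ne),
    ← lintegral_const_mul' _ _ ENNReal.ofReal_ne_top]
  refine (setLIntegral_mono' measurableSet_ball.compl fun y hy => ?_).trans
    (setLIntegral_le_lintegral _ _)
  rw [← ENNReal.ofReal_mul (by positivity), ← ofReal_norm]
  exact ENNReal.ofReal_le_ofReal (hbound e y he hy)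

theorem exists_lintegral_enorm_secondDiff_le [Nontrivial V] (hf : IsPosHomogeneous q f)
    (hc : ContDiffOn ℝ 2 f {0}ᶜ) (hq : -finrank ℝ V < q) (hq' : q < 2 - finrank ℝ V) :
    ∃ C : ℝ≥0, ∀ h : V, ∫⁻ y, ‖secondDiff f h y‖ₑ ∂μ ≤ C * ‖h‖ₑ ^ (finrank ℝ V + q) := by
  have hloc : LocallyIntegrable f μ := hf.locallyIntegrable hc.continuousOn hq
  have hnear : ∫⁻ y in ball (0 : V) 3, ‖f y‖ₑ ∂μ < ∞ :=
    ((hloc.integrableOn_isCompact (isCompact_closedBall 0 3)).mono_set ball_subset_closedBall).2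
  obtain ⟨C, hC⟩ := hf.exists_setLIntegral_compl_ball_enorm_secondDiff_le (μ := μ) hc hq'
  have hunit : ∀ e : V, ‖e‖ ≤ 1 →
      ∫⁻ y, ‖secondDiff f e y‖ₑ ∂μ ≤ 4 * ∫⁻ y in ball (0 : V) 3, ‖f y‖ₑ ∂μ + C := fun e he => by
    rw [← lintegral_add_compl _ (measurableSet_ball (x := (0 : V)) (ε := 2))]
    refine add_le_add (setLIntegral_enorm_secondDiff_le hloc.aestronglyMeasurable
      (fun y hy => ?_) (fun y hy => ?_) (ball_subset_ball (by norm_num))) (hC e he)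
    all_goals rw [mem_ball_zero_iff] at *
    · linarith [norm_add_le y e]
    · linarith [norm_sub_le y e]
  refine ⟨(4 * ∫⁻ y in ball (0 : V) 3, ‖f y‖ₑ ∂μ).toNNReal + C, fun h => ?_⟩
  rw [ENNReal.coe_add, ENNReal.coe_toNNReal (ENNReal.mul_ne_top (by norm_num) hnear.ne)]
  rcases eq_or_ne h 0 with rfl | hh
  · simp [secondDiff, two_nsmul]
  · have hh0 : 0 < ‖h‖ := norm_pos_iff.2 hh
    have hstep := hf.lintegral_enorm_secondDiff_smul (μ := μ) hh0 (‖h‖⁻¹ • h)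
    rw [smul_inv_smul₀ hh0.ne', ← ENNReal.ofReal_rpow_of_pos hh0, ofReal_norm] at hstep
    rw [hstep, mul_comm]
    gcongr
    exact hunit _ (by simp [norm_smul, hh])

end IsPosHomogeneous

theorem exists_lintegral_enorm_secondDiff_smul_le {a : V → ℝ} {f : V → F} {L C : ℝ≥0}
    (ha : LipschitzWith L a) (hac : HasCompactSupport a) (hf : LocallyIntegrable f μ)
    (hC : ∀ h, ∫⁻ y, ‖secondDiff f h y‖ₑ ∂μ ≤ C * ‖h‖ₑ) :
    ∃ C' : ℝ≥0, ∀ h, ∫⁻ y, ‖secondDiff (fun x => a x • f x) h y‖ₑ ∂μ ≤ C' * ‖h‖ₑ := by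
  obtain ⟨A, hA⟩ := ha.continuous.bounded_above_of_compact_support hac
  have haA : ∀ x, ‖a x‖ₑ ≤ A.toNNReal := fun x => by
    rw [← ofReal_norm]
    exact ENNReal.ofReal_le_ofReal (hA x)
  have hfar : Integrable (fun x => a x • f x) μ :=
    hf.integrable_smul_left_of_hasCompactSupport ha.continuous hac
  have hnear : IntegrableOn f (cthickening 1 (tsupport a)) μ :=
    hf.integrableOn_isCompact (IsCompact.cthickening hac)
  refine ⟨A.toNNReal * C + 2 * (L * (∫⁻ y in cthickening 1 (tsupport a), ‖f y‖ₑ ∂μ).toNNReal) +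
    4 * (∫⁻ y, ‖a y • f y‖ₑ ∂μ).toNNReal, fun h => ?_⟩
  push_cast [ENNReal.coe_toNNReal hnear.2.ne, ENNReal.coe_toNNReal hfar.2.ne]
  rw [add_mul]
  rcases le_total ‖h‖ 1 with hh | hh
  · refine le_add_right ((lintegral_enorm_secondDiff_smul_le ha haA hf.aestronglyMeasurable
      hh).trans ?_)
    calc _ ≤ A.toNNReal * (C * ‖h‖ₑ) +
          2 * (L * ‖h‖ₑ * ∫⁻ y in cthickening 1 (tsupport a), ‖f y‖ₑ ∂μ) := by
          gcongr
          exact hC h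
      _ = _ := by ring
  · refine le_add_left ((lintegral_enorm_secondDiff_le hfar.1 h).trans ?_)
    refine le_mul_of_one_le_right' ?_
    simpa only [← ofReal_norm, ENNReal.one_le_ofReal] using hh

end L1

section Fourier

open scoped FourierTransform RealInnerProductSpace

variable {V E : Type*} [NormedAddCommGroup V] [InnerProductSpace ℝ V] [FiniteDimensional ℝ V]
  [MeasurableSpace V] [BorelSpace V] [NormedAddCommGroup E] [NormedSpace ℂ E] {f : V → E}

theorem fourier_comp_add_right (f : V → E) (h ξ : V) :
    𝓕 (fun y => f (y + h)) ξ = 𝐞 ⟪h, ξ⟫ • 𝓕 f ξ :=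
  congrFun (VectorFourier.fourierIntegral_comp_add_right 𝐞 volume (innerₗ V) f h) ξ

theorem fourierChar_add_fourierChar_neg (t : ℝ) :
    (𝐞 t + 𝐞 (-t) : ℂ) = 2 * Real.cos (2 * Real.pi * t) := by
  rw [Real.fourierChar_apply, Real.fourierChar_apply, Complex.ofReal_cos, Complex.two_cos]
  push_cast
  ring_nf

theorem enorm_fourier_le_lintegral (f : V → E) (ξ : V) : ‖𝓕 f ξ‖ₑ ≤ ∫⁻ y, ‖f y‖ₑ := by
  rw [Real.fourier_eq]
  exact (enorm_integral_le_lintegral_enorm _).trans_eq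
    (by simp only [← ofReal_norm, Circle.norm_smul])

theorem fourier_secondDiff (hf : Integrable f) (h ξ : V) :
    𝓕 (secondDiff f h) ξ = (2 * Real.cos (2 * Real.pi * ⟪h, ξ⟫) - 2 : ℂ) • 𝓕 f ξ := by
  have hadd : ∀ {u w : V → E}, Integrable u → Integrable w → 𝓕 (u + w) ξ = 𝓕 u ξ + 𝓕 w ξ :=
    fun hu hw => congrFun (VectorFourier.fourierIntegral_add (L := innerₗ V)
      Real.continuous_fourierChar continuous_inner hu hw) ξ
  have hsmul : 𝓕 ((-2 : ℂ) • f) ξ = (-2 : ℂ) • 𝓕 f ξ :=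
    congrFun (VectorFourier.fourierIntegral_const_smul 𝐞 volume (innerₗ V) f (-2)) ξ
  have hsplit : secondDiff f h =
      ((fun y => f (y + h)) + fun y => f (y + -h)) + (-2 : ℂ) • f := by
    ext y
    simp only [secondDiff, Pi.add_apply, Pi.smul_apply, sub_eq_add_neg (G := V)]
    module
  have hi : ∀ k, Integrable fun y => f (y + k) := hf.comp_add_right
  rw [hsplit, hadd ((hi h).add (hi (-h))) (hf.smul _), hadd (hi h) (hi (-h)),
    fourier_comp_add_right, fourier_comp_add_right, hsmul, inner_neg_left, Circle.smul_def,
    Circle.smul_def, ← add_smul, ← add_smul, fourierChar_add_fourierChar_neg, sub_eq_add_neg]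

theorem norm_mul_norm_fourier_le_of_secondDiff (hf : Integrable f) {C : ℝ≥0}
    (hC : ∀ h, ∫⁻ y, ‖secondDiff f h y‖ₑ ≤ C * ‖h‖ₑ) (ξ : V) : ‖ξ‖ * ‖𝓕 f ξ‖ ≤ C / 8 := by
  rcases eq_or_ne ξ 0 with rfl | hξ
  · simp only [norm_zero, zero_mul]
    positivity
  let h : V := (2 * ‖ξ‖ ^ 2)⁻¹ • ξ
  have hnorm : ‖h‖ = (2 * ‖ξ‖)⁻¹ := by
    simp only [h, norm_smul, norm_inv, norm_mul, norm_pow, Real.norm_two, norm_norm]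
    field_simp
  have hinner : 2 * Real.pi * ⟪h, ξ⟫ = Real.pi := by
    simp only [h, real_inner_smul_left, real_inner_self_eq_norm_sq]
    field_simp
  have hfour : 𝓕 (secondDiff f h) ξ = (-4 : ℂ) • 𝓕 f ξ := by
    rw [fourier_secondDiff hf, hinner, Real.cos_pi]
    norm_num
  have hle : ‖𝓕 (secondDiff f h) ξ‖ ≤ C * ‖h‖ := by
    rw [← NNReal.coe_mk ‖h‖ (norm_nonneg h)]
    exact enorm_le_coe.1 ((enorm_fourier_le_lintegral _ ξ).trans (hC h))
  rw [hfour, norm_smul, hnorm, norm_neg, Complex.norm_ofNat, ← div_eq_mul_inv,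
    le_div_iff₀ (by positivity)] at hle
  linarith

end Fourier

section Plancherel

open scoped FourierTransform SchwartzMap LineDeriv Convolution ContDiff
open ContinuousLinearMap

variable {V : Type*} [NormedAddCommGroup V] [InnerProductSpace ℝ V] [FiniteDimensional ℝ V]
  [MeasurableSpace V] [BorelSpace V] {H : Type*} [NormedAddCommGroup H] [InnerProductSpace ℂ H]

theorem norm_fourier_lineDerivOp (f : 𝓢(V, H)) (v ξ : V) :
    ‖(𝓕 (∂_{v} f)) ξ‖ = 2 * Real.pi * (|inner ℝ ξ v| * ‖(𝓕 f) ξ‖) := by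
  have hv : (inner ℝ · v : V → ℝ).HasTemperateGrowth := by fun_prop
  rw [SchwartzMap.fourier_lineDerivOp_eq, smul_apply, SchwartzMap.smulLeftCLM_apply_apply hv,
    norm_smul, norm_smul, Real.norm_eq_abs]
  simp [abs_of_pos Real.pi_pos]

variable [CompleteSpace H]

theorem eLpNorm_fourier_schwartzMap (f : 𝓢(V, H)) :
    eLpNorm (𝓕 f : 𝓢(V, H)) 2 volume = eLpNorm f 2 volume := by
  have hnorm := SchwartzMap.norm_fourier_toL2_eq f
  rwa [SchwartzMap.norm_toLp, SchwartzMap.norm_toLp, ENNReal.toReal_eq_toReal_iff'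
    (SchwartzMap.eLpNorm_lt_top _ 2 volume).ne (SchwartzMap.eLpNorm_lt_top _ 2 volume).ne] at hnorm

theorem eLpNorm_fderiv_convolution_le_of_norm_mul_norm_fourier_le {K : V → ℂ} (hK : Integrable K)
    (hKc : HasCompactSupport K) {M : ℝ} (hM : ∀ ξ : V, ‖ξ‖ * ‖𝓕 K ξ‖ ≤ M) {g : V → H}
    (hg : ContDiff ℝ ∞ g) (hgc : HasCompactSupport g) (v : V) :
    eLpNorm (fun x => fderiv ℝ (K ⋆[lsmul ℝ ℂ] g) x v) 2 volume ≤
      ENNReal.ofReal (2 * Real.pi * M) * ‖v‖ₑ * eLpNorm g 2 volume := by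
  let G : 𝓢(V, H) := hgc.toSchwartzMap hg
  let U : 𝓢(V, H) := (hKc.convolution (lsmul ℝ ℂ) hgc).toSchwartzMap
    (hgc.contDiff_convolution_right (n := ⊤) (lsmul ℝ ℂ) hK.locallyIntegrable hg)
  have hconv : (U : V → H) = K ⋆[lsmul ℂ ℂ] (G : V → H) := rfl
  have hU : ∀ ξ, (𝓕 U) ξ = 𝓕 K ξ • (𝓕 G) ξ := fun ξ => by
    rw [SchwartzMap.fourier_coe, SchwartzMap.fourier_coe, hconv,
      Real.fourier_smul_convolution_eq hK G.integrable]
  have hbound : ∀ ξ, ‖(𝓕 (∂_{v} U)) ξ‖ ≤ 2 * Real.pi * M * ‖v‖ * ‖(𝓕 G) ξ‖ := fun ξ => by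
    rw [norm_fourier_lineDerivOp, hU, norm_smul]
    calc 2 * Real.pi * (|inner ℝ ξ v| * (‖𝓕 K ξ‖ * ‖(𝓕 G) ξ‖))
        ≤ 2 * Real.pi * (‖ξ‖ * ‖v‖ * (‖𝓕 K ξ‖ * ‖(𝓕 G) ξ‖)) := by
          gcongr
          exact abs_real_inner_le_norm ξ v
      _ = 2 * Real.pi * (‖ξ‖ * ‖𝓕 K ξ‖) * ‖v‖ * ‖(𝓕 G) ξ‖ := by ring
      _ ≤ 2 * Real.pi * M * ‖v‖ * ‖(𝓕 G) ξ‖ := by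
          gcongr
          exact hM ξ
  calc eLpNorm (fun x => fderiv ℝ (K ⋆[lsmul ℝ ℂ] g) x v) 2 volume
      = eLpNorm (∂_{v} U : 𝓢(V, H)) 2 volume :=
        congrArg (eLpNorm · 2 volume) (funext fun x =>
          (SchwartzMap.lineDerivOp_apply_eq_fderiv v U x).symm)
    _ = eLpNorm (𝓕 (∂_{v} U) : 𝓢(V, H)) 2 volume := (eLpNorm_fourier_schwartzMap _).symm
    _ ≤ ENNReal.ofReal (2 * Real.pi * M * ‖v‖) * eLpNorm (𝓕 G : 𝓢(V, H)) 2 volume :=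
        eLpNorm_le_mul_eLpNorm_of_ae_le_mul (.of_forall hbound) 2
    _ = ENNReal.ofReal (2 * Real.pi * M) * ‖v‖ₑ * eLpNorm g 2 volume := by
        rw [eLpNorm_fourier_schwartzMap, ENNReal.ofReal_mul' (norm_nonneg v), ofReal_norm]
        rfl

theorem ofReal_convolution_mul (K g : V → ℝ) (x : V) :
    (((K ⋆[mul ℝ ℝ] g) x : ℝ) : ℂ) = ((fun y => (K y : ℂ)) ⋆[lsmul ℝ ℂ] fun y => (g y : ℂ)) x := by
  rw [convolution_def, convolution_def, ← integral_complex_ofReal]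
  simp

theorem eLpNorm_fderiv_convolution_le_of_secondDiff {K : V → ℝ} (hK : Integrable K)
    (hKc : HasCompactSupport K) {C : ℝ≥0} (hC : ∀ h, ∫⁻ y, ‖secondDiff K h y‖ₑ ≤ C * ‖h‖ₑ)
    {g : V → ℝ} (hg : ContDiff ℝ ∞ g) (hgc : HasCompactSupport g) (v : V) :
    eLpNorm (fun x => fderiv ℝ (K ⋆[mul ℝ ℝ] g) x v) 2 volume ≤
      ENNReal.ofReal (2 * Real.pi * (C / 8)) * ‖v‖ₑ * eLpNorm g 2 volume := by
  have hdiff : Differentiable ℝ (K ⋆[mul ℝ ℝ] g) :=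
    (hgc.contDiff_convolution_right (n := ⊤) _ hK.locallyIntegrable hg).differentiable (by simp)
  have hderiv : ∀ x, (fderiv ℝ (K ⋆[mul ℝ ℝ] g) x v : ℂ) =
      fderiv ℝ ((fun y => (K y : ℂ)) ⋆[lsmul ℝ ℂ] fun y => (g y : ℂ)) x v := fun x => by
    rw [← funext (ofReal_convolution_mul K g)]
    exact congrArg (· v)
      ((Complex.ofRealCLM.hasFDerivAt.comp x (hdiff x).hasFDerivAt).fderiv).symm
  have hsec : ∀ h y, ‖secondDiff (fun y => (K y : ℂ)) h y‖ₑ = ‖secondDiff K h y‖ₑ := fun h y => by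
    rw [← enorm_norm (secondDiff K h y), ← Complex.norm_real, enorm_norm]
    exact congrArg _ (secondDiff_comp Complex.ofRealCLM K h y)
  have hKℂ : Integrable fun y => (K y : ℂ) := hK.ofReal
  have hmain := eLpNorm_fderiv_convolution_le_of_norm_mul_norm_fourier_le hKℂ
    (hKc.comp_left Complex.ofReal_zero)
    (norm_mul_norm_fourier_le_of_secondDiff hKℂ (by simpa only [hsec] using hC))
    (Complex.ofRealCLM.contDiff.comp hg) (hgc.comp_left Complex.ofReal_zero) v
  refine (eLpNorm_congr_norm_ae (.of_forall fun x => ?_)).trans_le (hmain.trans_eq (congrArg _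
    (eLpNorm_congr_norm_ae (.of_forall fun x => Complex.norm_real (g x)))))
  rw [← Complex.norm_real, hderiv]
  rfl

end Plancherel

section Cutoff

open scoped ContDiff

variable {V E : Type*} [NormedAddCommGroup V] [NormedSpace ℝ V] [NormedAddCommGroup E]
  [NormedSpace ℝ E]

theorem eqOn_fderiv_of_eqOn_of_isOpen {f g : V → E} {s : Set V} (hs : IsOpen s)
    (hfg : Set.EqOn f g s) : Set.EqOn (fderiv ℝ f) (fderiv ℝ g) s :=
  fun _ hx => (hfg.eventuallyEq_of_mem (hs.mem_nhds hx)).fderiv_eq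

theorem exists_contDiff_hasCompactSupport_eqOn_ball [FiniteDimensional ℝ V] {n : ℕ∞}
    {f : V → E} (hf : ContDiff ℝ n f) (x : V) {r R : ℝ} (hr : 0 < r) (hrR : r < R) :
    ∃ g : V → E, ContDiff ℝ n g ∧ HasCompactSupport g ∧ Set.EqOn f g (ball x r) ∧
      ∀ y, ‖g y‖ ≤ ‖(ball x R).indicator f y‖ := by
  let χ : ContDiffBump x := ⟨r, R, hr, hrR⟩
  refine ⟨fun y => χ y • f y, χ.contDiff.smul hf, χ.hasCompactSupport.smul_right,
    fun y hy => ?_, fun y => ?_⟩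
  · simp only [χ.one_of_mem_closedBall (ball_subset_closedBall hy), one_smul]
  · by_cases hy : y ∈ ball x R
    · rw [Set.indicator_of_mem hy, norm_smul, Real.norm_of_nonneg χ.nonneg]
      exact mul_le_of_le_one_left (norm_nonneg _) χ.le_one
    · simp only [χ.zero_of_le_dist (not_lt.1 hy), zero_smul, norm_zero, norm_nonneg]

end Cutoff

section UniformlyLocal

open scoped ContDiff

theorem eLpNorm_restrict_union_le {α F : Type*} [MeasurableSpace α] [NormedAddCommGroup F]
    {μ : Measure α} {f : α → F} {s t : Set α} (hf : AEStronglyMeasurable f μ)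
    (hs : MeasurableSet s) (ht : MeasurableSet t) {p : ℝ≥0∞} (hp : 1 ≤ p) :
    eLpNorm f p (μ.restrict (s ∪ t)) ≤
      eLpNorm f p (μ.restrict s) + eLpNorm f p (μ.restrict t) := by
  calc eLpNorm f p (μ.restrict (s ∪ t))
      = eLpNorm (s.indicator f + (t \ s).indicator f) p μ := by
        rw [← eLpNorm_indicator_eq_eLpNorm_restrict (hs.union ht), ← Set.union_sdiff_self,
          Set.indicator_union_of_disjoint Set.disjoint_sdiff_right]
        rfl
    _ ≤ eLpNorm (s.indicator f) p μ + eLpNorm ((t \ s).indicator f) p μ :=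
        eLpNorm_add_le (hf.indicator hs) (hf.indicator (ht.diff hs)) hp
    _ ≤ eLpNorm f p (μ.restrict s) + eLpNorm f p (μ.restrict t) := by
        rw [eLpNorm_indicator_eq_eLpNorm_restrict hs,
          eLpNorm_indicator_eq_eLpNorm_restrict (ht.diff hs)]
        gcongr
        exact Set.sdiff_subset

theorem eLpNorm_restrict_biUnion_finset_le {α F ι : Type*} [MeasurableSpace α]
    [NormedAddCommGroup F] {μ : Measure α} {f : α → F} {s : ι → Set α}
    (hf : AEStronglyMeasurable f μ) (hs : ∀ i, MeasurableSet (s i)) (t : Finset ι)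
    {p : ℝ≥0∞} (hp : 1 ≤ p) :
    eLpNorm f p (μ.restrict (⋃ i ∈ t, s i)) ≤ ∑ i ∈ t, eLpNorm f p (μ.restrict (s i)) := by
  classical
  induction t using Finset.induction_on with
  | empty => simp
  | insert i t hi ih =>
    rw [Finset.set_biUnion_insert, Finset.sum_insert hi]
    exact (eLpNorm_restrict_union_le hf (hs i) (t.measurableSet_biUnion fun j _ => hs j) hp).trans
      (by gcongr)

variable {V E F : Type*} [NormedAddCommGroup V] [MeasurableSpace V] [BorelSpace V]
  [NormedAddCommGroup E] [NormedAddCommGroup F]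

theorem exists_eLpNorm_restrict_ball_le_iSup [ProperSpace V] (μ : Measure V) {p : ℝ≥0∞}
    (hp : 1 ≤ p) (R : ℝ) :
    ∃ N : ℕ, ∀ f : V → E, AEStronglyMeasurable f μ → ∀ x,
      eLpNorm f p (μ.restrict (ball x R)) ≤ N * ⨆ z, eLpNorm f p (μ.restrict (ball z 1)) := by
  obtain ⟨t, -, htf, ht⟩ := (isCompact_closedBall (0 : V) R).finite_cover_balls zero_lt_one
  lift t to Finset V using htf
  refine ⟨t.card, fun f hf x => ?_⟩
  have hcover : ball x R ⊆ ⋃ c ∈ t, ball (x + c) 1 := fun y hy => by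
    have hyx : y - x ∈ closedBall (0 : V) R :=
      mem_closedBall_zero_iff.2 (mem_ball_iff_norm.1 hy).le
    obtain ⟨c, hc, hyc⟩ := Set.mem_iUnion₂.1 (ht hyx)
    refine Set.mem_biUnion hc ?_
    rwa [mem_ball_iff_norm, ← sub_sub, ← mem_ball_iff_norm]
  calc eLpNorm f p (μ.restrict (ball x R))
      ≤ eLpNorm f p (μ.restrict (⋃ c ∈ t, ball (x + c) 1)) :=
        eLpNorm_mono_measure f (Measure.restrict_mono_set μ hcover)
    _ ≤ ∑ c ∈ t, eLpNorm f p (μ.restrict (ball (x + c) 1)) :=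
        eLpNorm_restrict_biUnion_finset_le hf (fun _ => measurableSet_ball) t hp
    _ ≤ ∑ _c ∈ t, ⨆ z, eLpNorm f p (μ.restrict (ball z 1)) :=
        Finset.sum_le_sum fun c _ =>
          le_iSup (fun z => eLpNorm f p (μ.restrict (ball z 1))) (x + c)
    _ = t.card * ⨆ z, eLpNorm f p (μ.restrict (ball z 1)) := by
        rw [Finset.sum_const, nsmul_eq_mul]

theorem exists_iSup_eLpNorm_le_of_eqOn_ball [NormedSpace ℝ V] [FiniteDimensional ℝ V]
    [NormedSpace ℝ E] (μ : Measure V) {p : ℝ≥0∞} (hp : 1 ≤ p) {R : ℝ} (hR : 0 < R) :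
    ∃ N : ℕ, ∀ (n : ℕ∞) (T : (V → E) → V → F) (C : ℝ≥0∞),
      (∀ f g x, Set.EqOn f g (ball x R) → Set.EqOn (T f) (T g) (ball x 1)) →
      (∀ g, ContDiff ℝ n g → HasCompactSupport g → eLpNorm (T g) p μ ≤ C * eLpNorm g p μ) →
      ∀ f, ContDiff ℝ n f → ⨆ x, eLpNorm (T f) p (μ.restrict (ball x 1)) ≤
        C * N * ⨆ x, eLpNorm f p (μ.restrict (ball x 1)) := by
  obtain ⟨N, hN⟩ := exists_eLpNorm_restrict_ball_le_iSup (E := E) μ hp (R + 1)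
  refine ⟨N, fun n T C hlocal hbound f hf => iSup_le fun x => ?_⟩
  obtain ⟨g, hg, hgc, hfg, hgf⟩ :=
    exists_contDiff_hasCompactSupport_eqOn_ball hf x hR (lt_add_one R)
  calc eLpNorm (T f) p (μ.restrict (ball x 1))
      = eLpNorm (T g) p (μ.restrict (ball x 1)) :=
        eLpNorm_congr_ae ((ae_restrict_mem measurableSet_ball).mono (hlocal f g x hfg))
    _ ≤ eLpNorm (T g) p μ := eLpNorm_restrict_le ..
    _ ≤ C * eLpNorm g p μ := hbound g hg hgc
    _ ≤ C * eLpNorm f p (μ.restrict (ball x (R + 1))) := by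
        rw [← eLpNorm_indicator_eq_eLpNorm_restrict measurableSet_ball]
        gcongr
        exact eLpNorm_mono hgf
    _ ≤ C * N * ⨆ x, eLpNorm f p (μ.restrict (ball x 1)) := by
        rw [mul_assoc]
        gcongr
        exact hN f hf.continuous.aestronglyMeasurable x

end UniformlyLocal

section Convolution

open scoped Convolution ContDiff

variable {V E E' F : Type*} [NormedAddCommGroup V] [MeasurableSpace V]
  [NormedAddCommGroup E] [NormedSpace ℝ E] [NormedAddCommGroup E'] [NormedSpace ℝ E']
  [NormedAddCommGroup F] [NormedSpace ℝ F] {μ : Measure V} (L : E →L[ℝ] E' →L[ℝ] F)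
  {K : V → E}

theorem exists_eqOn_convolution_of_eqOn_ball (hK : HasCompactSupport K) :
    ∃ R > 0, ∀ (f g : V → E') (x : V), Set.EqOn f g (ball x R) →
      Set.EqOn (K ⋆[L, μ] f) (K ⋆[L, μ] g) (ball x 1) := by
  obtain ⟨ρ, hρ, hKρ⟩ := hK.isBounded.exists_pos_norm_le
  refine ⟨1 + ρ, by positivity, fun f g x hfg y hy => integral_congr_ae (.of_forall fun t => ?_)⟩
  simp only
  by_cases ht : t ∈ tsupport K
  · have hyt : y - t ∈ ball x (1 + ρ) := by
      rw [mem_ball_iff_norm] at hy ⊢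
      rw [sub_right_comm]
      exact (norm_sub_le _ _).trans_lt (add_lt_add_of_lt_of_le hy (hKρ t ht))
    rw [hfg hyt]
  · simp only [image_eq_zero_of_notMem_tsupport ht, map_zero, zero_apply]

variable [NormedSpace ℝ V] [FiniteDimensional ℝ V] [BorelSpace V] {f : V → E'}

theorem contDiff_convolution_of_hasCompactSupport_left {n : ℕ∞} (hKc : HasCompactSupport K)
    (hK : LocallyIntegrable K μ) (hf : ContDiff ℝ n f) : ContDiff ℝ n (K ⋆[L, μ] f) := by
  obtain ⟨R, hR, hlocal⟩ := exists_eqOn_convolution_of_eqOn_ball (μ := μ) L hKc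
  refine contDiff_iff_contDiffAt.2 fun x => ?_
  obtain ⟨g, hg, hgc, hfg, -⟩ :=
    exists_contDiff_hasCompactSupport_eqOn_ball hf x hR (lt_add_one R)
  exact (hgc.contDiff_convolution_right L hK hg).contDiffAt.congr_of_eventuallyEq
    ((hlocal f g x hfg).eventuallyEq_of_mem (ball_mem_nhds x one_pos))

theorem fderiv_convolution_apply_of_hasCompactSupport_left [SFinite μ] [μ.IsAddLeftInvariant]
    (hKc : HasCompactSupport K) (hK : LocallyIntegrable K μ) (hf : ContDiff ℝ 1 f) (x v : V) :
    fderiv ℝ (K ⋆[L, μ] f) x v = (K ⋆[L, μ] fun y => fderiv ℝ f y v) x := by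
  obtain ⟨R, hR, hlocal⟩ := exists_eqOn_convolution_of_eqOn_ball (μ := μ) L hKc
  obtain ⟨g, hg, hgc, hfg, -⟩ :=
    exists_contDiff_hasCompactSupport_eqOn_ball (n := 1) hf x hR (lt_add_one R)
  have hfg' : Set.EqOn (fun y => fderiv ℝ f y v) (fun y => fderiv ℝ g y v) (ball x R) :=
    fun y hy => congrArg (· v) (eqOn_fderiv_of_eqOn_of_isOpen isOpen_ball hfg hy)
  calc fderiv ℝ (K ⋆[L, μ] f) x v
      = fderiv ℝ (K ⋆[L, μ] g) x v := congrArg (· v)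
        (eqOn_fderiv_of_eqOn_of_isOpen isOpen_ball (hlocal f g x hfg) (mem_ball_self one_pos))
    _ = (K ⋆[L.precompR V, μ] fderiv ℝ g) x v :=
        congrArg (· v) (hgc.hasFDerivAt_convolution_right L hK hg x).fderiv
    _ = (K ⋆[L, μ] fun y => fderiv ℝ g y v) x :=
        convolution_precompR_apply L hK (hgc.fderiv ℝ) (hg.continuous_fderiv one_ne_zero) x v
    _ = (K ⋆[L, μ] fun y => fderiv ℝ f y v) x :=
        (hlocal _ _ x hfg' (mem_ball_self one_pos)).symm

end Convolution

section MultiIndex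

open scoped ContDiff

variable {d : ℕ} {E F : Type*} [NormedAddCommGroup E] [NormedSpace ℝ E] [NormedAddCommGroup F]
  [NormedSpace ℝ F] {f : EuclideanSpace ℝ (Fin d) → E}

theorem contDiff_pd (hf : ContDiff ℝ ∞ f) (i : Fin d) : ContDiff ℝ ∞ (pd i f) :=
  (hf.fderiv_right (by simp)).clm_apply contDiff_const

theorem pd_pd_apply (hf : ContDiff ℝ 2 f) (i j : Fin d) (x : EuclideanSpace ℝ (Fin d)) :
    pd i (pd j f) x =
      fderiv ℝ (fderiv ℝ f) x (EuclideanSpace.single i 1) (EuclideanSpace.single j 1) := by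
  have hdiff : DifferentiableAt ℝ (fderiv ℝ f) x :=
    (hf.fderiv_right (m := 1) (by norm_num)).differentiable one_ne_zero x
  unfold pd
  rw [fderiv_clm_apply hdiff (differentiableAt_const _)]
  simp

theorem pd_comm (hf : ContDiff ℝ 2 f) (i j : Fin d) : pd i (pd j f) = pd j (pd i f) := by
  ext x
  rw [pd_pd_apply hf, pd_pd_apply hf]
  exact (hf.contDiffAt.isSymmSndFDerivAt (by simp)).eq _ _

theorem contDiff_iterate_pd (hf : ContDiff ℝ ∞ f) (i : Fin d) (n : ℕ) :
    ContDiff ℝ ∞ ((pd i)^[n] f) :=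
  Function.Iterate.rec (fun g => ContDiff ℝ ∞ g) hf (fun _ hg => contDiff_pd hg i) n

theorem contDiff_foldr_iterate_pd (hf : ContDiff ℝ ∞ f) (α : Fin d → ℕ) (l : List (Fin d)) :
    ContDiff ℝ ∞ (l.foldr (fun i g => (pd i)^[α i] g) f) := by
  induction l with
  | nil => exact hf
  | cons i l ih => exact contDiff_iterate_pd ih i (α i)

theorem contDiff_Dm (hf : ContDiff ℝ ∞ f) (α : Fin d → ℕ) : ContDiff ℝ ∞ (Dm α f) :=
  contDiff_foldr_iterate_pd hf α _

variable {T : (EuclideanSpace ℝ (Fin d) → E) → EuclideanSpace ℝ (Fin d) → F}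

theorem iterate_pd_comm_of_pd_comm
    (hT : ∀ f, ContDiff ℝ ∞ f → ∀ j, pd j (T f) = T (pd j f)) (hf : ContDiff ℝ ∞ f) (j : Fin d)
    (n : ℕ) : (pd j)^[n] (T f) = T ((pd j)^[n] f) := by
  induction n with
  | zero => rfl
  | succ n ih =>
    rw [Function.iterate_succ_apply', Function.iterate_succ_apply', ih,
      hT _ (contDiff_iterate_pd hf j n)]

theorem Dm_comm_of_pd_comm
    (hT : ∀ f, ContDiff ℝ ∞ f → ∀ j, pd j (T f) = T (pd j f)) (hf : ContDiff ℝ ∞ f)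
    (α : Fin d → ℕ) : Dm α (T f) = T (Dm α f) := by
  unfold Dm
  induction List.finRange d with
  | nil => rfl
  | cons i l ih =>
    rw [List.foldr_cons, List.foldr_cons, ih,
      iterate_pd_comm_of_pd_comm hT (contDiff_foldr_iterate_pd hf α l)]

theorem ulSobolev_le_of_pd_comm
    (hT : ∀ f, ContDiff ℝ ∞ f → ∀ j, pd j (T f) = T (pd j f)) {C : ℝ≥0∞}
    (hC : ∀ f, ContDiff ℝ ∞ f → ⨆ x, eLpNorm (T f) 2 (volume.restrict (ball x 1)) ≤
      C * ⨆ x, eLpNorm f 2 (volume.restrict (ball x 1)))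
    (r : ℕ) (hf : ContDiff ℝ ∞ f) : ulSobolev d r (T f) ≤ C * ulSobolev d r f := by
  rw [ulSobolev, ulSobolev, Finset.mul_sum]
  refine Finset.sum_le_sum fun α _ => ?_
  rw [Dm_comm_of_pd_comm hT hf]
  exact hC _ (contDiff_Dm hf α)

end MultiIndex

section GradientBound

open scoped Convolution ContDiff
open ContinuousLinearMap

theorem exists_iSup_eLpNorm_fderiv_convolution_le {V : Type*} [NormedAddCommGroup V]
    [InnerProductSpace ℝ V] [FiniteDimensional ℝ V] [MeasurableSpace V] [BorelSpace V] {K : V → ℝ}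
    (hK : Integrable K) (hKc : HasCompactSupport K) {C : ℝ≥0}
    (hC : ∀ h, ∫⁻ y, ‖secondDiff K h y‖ₑ ≤ C * ‖h‖ₑ) :
    ∃ C' : ℝ≥0, ∀ (v : V) (f : V → ℝ), ContDiff ℝ ∞ f →
      ⨆ x, eLpNorm (fun y => fderiv ℝ (K ⋆[mul ℝ ℝ] f) y v) 2 (volume.restrict (ball x 1)) ≤
        C' * ‖v‖ₑ * ⨆ x, eLpNorm f 2 (volume.restrict (ball x 1)) := by
  obtain ⟨R, hR, hlocal⟩ := exists_eqOn_convolution_of_eqOn_ball (μ := volume) (mul ℝ ℝ) hKc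
  obtain ⟨N, hN⟩ := exists_iSup_eLpNorm_le_of_eqOn_ball (E := ℝ) (F := ℝ) (volume : Measure V)
    one_le_two hR
  refine ⟨(2 * Real.pi * (C / 8)).toNNReal * N, fun v f hf => ?_⟩
  have hbound := hN ⊤ (fun g y => fderiv ℝ (K ⋆[mul ℝ ℝ] g) y v)
    (ENNReal.ofReal (2 * Real.pi * (C / 8)) * ‖v‖ₑ)
    (fun f g x hfg y hy => congrArg (· v)
      (eqOn_fderiv_of_eqOn_of_isOpen isOpen_ball (hlocal f g x hfg) hy))
    (fun g hg hgc => eLpNorm_fderiv_convolution_le_of_secondDiff hK hKc hC hg hgc v) f hf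
  rwa [mul_right_comm (ENNReal.ofReal _)] at hbound

variable {d : ℕ}

theorem pd_pd_convolution {K f : EuclideanSpace ℝ (Fin d) → ℝ} (hKc : HasCompactSupport K)
    (hK : LocallyIntegrable K) (hf : ContDiff ℝ ∞ f) (i j : Fin d) :
    pd j (pd i (K ⋆[mul ℝ ℝ] f)) = pd i (K ⋆[mul ℝ ℝ] pd j f) := by
  have hconv : pd j (K ⋆[mul ℝ ℝ] f) = K ⋆[mul ℝ ℝ] pd j f := funext fun x =>
    fderiv_convolution_apply_of_hasCompactSupport_left _ hKc hK (hf.of_le (by simp)) x _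
  have hsmooth : ContDiff ℝ ∞ (K ⋆[mul ℝ ℝ] f) :=
    contDiff_convolution_of_hasCompactSupport_left (n := ⊤) _ hKc hK hf
  rw [pd_comm (contDiff_infty.1 hsmooth 2), hconv]

theorem exists_ulSobolev_pd_convolution_le {K : EuclideanSpace ℝ (Fin d) → ℝ}
    (hKc : HasCompactSupport K) (hK : Integrable K) {C : ℝ≥0}
    (hC : ∀ h, ∫⁻ y, ‖secondDiff K h y‖ₑ ≤ C * ‖h‖ₑ) :
    ∃ C' : ℝ≥0, ∀ (r : ℕ) (f : EuclideanSpace ℝ (Fin d) → ℝ), ContDiff ℝ ∞ f →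
      ∀ i, ulSobolev d r (pd i (K ⋆[mul ℝ ℝ] f)) ≤ C' * ulSobolev d r f := by
  obtain ⟨C', hC'⟩ := exists_iSup_eLpNorm_fderiv_convolution_le hK hKc hC
  refine ⟨C', fun r f hf i => ulSobolev_le_of_pd_comm (T := fun g => pd i (K ⋆[mul ℝ ℝ] g))
    (fun g hg j => pd_pd_convolution hKc hK.locallyIntegrable hg i j) (fun g hg => ?_) r hf⟩
  have hnorm : ‖EuclideanSpace.single i (1 : ℝ)‖ₑ = 1 := by
    rw [← ofReal_norm, PiLp.norm_single, norm_one, ENNReal.ofReal_one]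
  have hle := hC' (EuclideanSpace.single i 1) g hg
  rwa [hnorm, mul_one] at hle

theorem conv_truncated_kernel_grad_general (hd : 1 ≤ d) {a Ψ : EuclideanSpace ℝ (Fin d) → ℝ}
    {L : ℝ≥0} (ha : LipschitzWith L a) (hac : HasCompactSupport a)
    (hΨ : IsPosHomogeneous ((1 : ℝ) - d) Ψ) (hΨc : ContDiffOn ℝ 2 Ψ {0}ᶜ) :
    ∃ C : ℝ, 0 < C ∧ ∀ (r : ℕ) (f : EuclideanSpace ℝ (Fin d) → ℝ), ContDiff ℝ ∞ f →
      (∀ x, Integrable fun y => a y * Ψ y * f (x - y)) ∧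
      ContDiff ℝ ∞ (fun x => ∫ y, a y * Ψ y * f (x - y)) ∧
      ∀ i, ulSobolev d r (pd i fun x => ∫ y, a y * Ψ y * f (x - y)) ≤
        ENNReal.ofReal C * ulSobolev d r f := by
  have : Nonempty (Fin d) := ⟨⟨0, hd⟩⟩
  have hloc : LocallyIntegrable Ψ := hΨ.locallyIntegrable hΨc.continuousOn (by simp)
  obtain ⟨C₀, hC₀⟩ := hΨ.exists_lintegral_enorm_secondDiff_le (μ := volume) hΨc (by simp)
    (by simp)
  obtain ⟨C₁, hC₁⟩ := exists_lintegral_enorm_secondDiff_smul_le ha hac hloc (C := C₀) (by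
    simpa using hC₀)
  have hKc : HasCompactSupport fun y => a y * Ψ y := hac.mul_right
  have hK : Integrable fun y => a y * Ψ y :=
    hloc.integrable_smul_left_of_hasCompactSupport ha.continuous hac
  obtain ⟨C, hC⟩ := exists_ulSobolev_pd_convolution_le hKc hK hC₁
  exact ⟨C + 1, by positivity, fun r f hf =>
    ⟨hKc.convolutionExists_left_of_continuous_right (mul ℝ ℝ) hK.locallyIntegrable hf.continuous,
      contDiff_convolution_of_hasCompactSupport_left (n := ⊤) (mul ℝ ℝ) hKc hK.locallyIntegrable hf,
      fun i => (hC r f hf i).trans (by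
        rw [← ENNReal.ofReal_coe_nnreal]
        gcongr
        exact (lt_add_one _).le)⟩⟩

end GradientBound

/-- **Lemma 2.11 of the paper** (unit cutoff scale): the gradient of convolution
with the truncated kernel `aΨ`, `Ψ(x) = |x|^{1−d}`, is bounded on `H^r_ul`. -/
theorem conv_truncated_kernel_grad (d : ℕ) (hd : 2 ≤ d)
    (a : EuclideanSpace ℝ (Fin d) → ℝ) (ha : ContDiff ℝ (⊤ : ℕ∞) a)
    (ha0 : ∀ x, 0 ≤ a x) (ha1 : ∀ x, a x ≤ 1)
    (haone : ∀ x ∈ ball (0 : EuclideanSpace ℝ (Fin d)) 1, a x = 1)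
    (hasupp : Function.support a ⊆ ball (0 : EuclideanSpace ℝ (Fin d)) 2)
    (r : ℕ) :
    ∃ C : ℝ, 0 < C ∧
      ∀ f : EuclideanSpace ℝ (Fin d) → ℝ, ContDiff ℝ (⊤ : ℕ∞) f →
        ulSobolev d r f ≠ ⊤ →
        (∀ x : EuclideanSpace ℝ (Fin d),
            Integrable (fun y => a y * ‖y‖ ^ ((1 : ℝ) - d) * f (x - y)) volume) ∧
        ContDiff ℝ 1
          (fun x : EuclideanSpace ℝ (Fin d) =>
            ∫ y, a y * ‖y‖ ^ ((1 : ℝ) - d) * f (x - y)) ∧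
        ∀ i : Fin d,
          (∑ α ∈ mSet d r, ⨆ x : EuclideanSpace ℝ (Fin d),
              eLpNorm
                (Dm α (pd i (fun x : EuclideanSpace ℝ (Fin d) =>
                  ∫ y, a y * ‖y‖ ^ ((1 : ℝ) - d) * f (x - y)))) 2
                (volume.restrict (ball x 1)))
            ≤ ENNReal.ofReal C * ulSobolev d r f := by
  have hac : HasCompactSupport a :=
    .of_support_subset_isCompact (isCompact_closedBall 0 2) (hasupp.trans ball_subset_closedBall)
  obtain ⟨L, hL⟩ := ha.lipschitzWith_of_hasCompactSupport hac (by simp)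
  have hΨ : ContDiffOn ℝ 2 (fun x : EuclideanSpace ℝ (Fin d) => ‖x‖ ^ ((1 : ℝ) - d)) {0}ᶜ :=
    fun x hx => ((contDiffAt_norm ℝ hx).rpow_const_of_ne (norm_ne_zero_iff.2 hx)).contDiffWithinAt
  obtain ⟨C, hC, hbound⟩ := conv_truncated_kernel_grad_general (one_le_two.trans hd) hL hac
    (.norm_rpow _) hΨ
  refine ⟨C, hC, fun f hf _ => ?_⟩
  obtain ⟨hint, hsmooth, hgrad⟩ := hbound r f hf
  exact ⟨hint, hsmooth.of_le (by simp), hgrad⟩
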